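/- Let c, G > 0 be constants, let a : [0,∞) → ℝ be continuously differentiable with a(t) > 0 for all t, and let M_bh : [0,∞) → ℝ be continuously differentiable with M_bh(t) > 0 for all t. The damping coefficient D(r,t) := (3c² r a(t)a′(t) − 8G M_bh(t) a′(t) + 2G a(t) M_bh′(t)) / (a(t)·(c² r a(t) − 2G M_bh(t))) is independent of the spatial variable, i.e. for every t ≥ 0 and all r₁, r₂ > 2G·M_bh(t)/(c²·a(t)) one has D(r₁,t) = D(r₂,t), if and only if there exists a constant k > 0 with M_bh(t) = k·a(t) for all t ≥ 0. -/

import Mathlib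

/-!
As a function of `r`, the damping coefficient is a constant plus a simple pole at the horizon, with
residue proportional to the Wronskian `M' a - M a'`. Independence of `r` at time `t` is therefore
the vanishing of that Wronskian at `t`. The Wronskian is the numerator of the derivative of `M / a`,
so it vanishes at all times exactly when `M / a` is constant.
-/

section Pointwise

variable {K : Type*} [Field K]

/-- The radial coordinate of the horizon, where the metric coefficient
`1 - 2 G M / (c² A r)` vanishes; `A` and `M` are the scale factor and the mass at a fixed time. -/
def horizonRadius (c G A M : K) : K :=
  2 * G * M / (c ^ 2 * A)

/-- The damping coefficient `D(r, t)`, the ratio of the coefficients of `ψ_t` and `ψ_tt` in the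
d'Alembert operator, at a fixed time: `A` and `M` are the values of the scale factor and the mass,
`A'` and `M'` those of their time derivatives. -/
def dampingCoefficient (c G A A' M M' r : K) : K :=
  (3 * c ^ 2 * r * A * A' - 8 * G * M * A' + 2 * G * A * M') /
    (A * (c ^ 2 * r * A - 2 * G * M))

lemma dampingCoefficient_eq_add_div_sub_horizonRadius {c G A M r : K} (A' M' : K) (hc : c ≠ 0)
    (hA : A ≠ 0) (hr : r ≠ horizonRadius c G A M) :
    dampingCoefficient c G A A' M M' r =
      3 * A' / A + 2 * G * (M' * A - M * A') / (c * A) ^ 2 / (r - horizonRadius c G A M) := by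
  have hr_sub : r - horizonRadius c G A M ≠ 0 := sub_ne_zero.mpr hr
  have hfactor : c ^ 2 * r * A - 2 * G * M = c ^ 2 * A * (r - horizonRadius c G A M) := by
    rw [horizonRadius]
    field_simp
  have hnumerator : 3 * c ^ 2 * r * A * A' - 8 * G * M * A' + 2 * G * A * M' =
      3 * A' * (c ^ 2 * A * (r - horizonRadius c G A M)) + 2 * G * (M' * A - M * A') := by
    linear_combination 3 * A' * hfactor
  rw [dampingCoefficient, hfactor, hnumerator]
  field_simp

variable [LinearOrder K] [IsStrictOrderedRing K]

lemma forall_gt_div_sub_eq_div_sub_iff {x₀ v : K} :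
    (∀ x y, x₀ < x → x₀ < y → v / (x - x₀) = v / (y - x₀)) ↔ v = 0 := by
  refine ⟨fun h => ?_, fun hv x y _ _ => by simp [hv]⟩
  have h12 : v / (x₀ + 1 - x₀) = v / (x₀ + 2 - x₀) := h _ _ (by simp) (by simp)
  rw [add_sub_cancel_left, add_sub_cancel_left] at h12
  linarith

lemma forall_gt_horizonRadius_dampingCoefficient_eq_iff {c G A : K} (A' M M' : K)
    (hc : c ≠ 0) (hG : G ≠ 0) (hA : A ≠ 0) :
    (∀ r₁ r₂, horizonRadius c G A M < r₁ → horizonRadius c G A M < r₂ →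
        dampingCoefficient c G A A' M M' r₁ = dampingCoefficient c G A A' M M' r₂) ↔
      M' * A = M * A' := by
  calc
    _ ↔ ∀ r₁ r₂, horizonRadius c G A M < r₁ → horizonRadius c G A M < r₂ →
        2 * G * (M' * A - M * A') / (c * A) ^ 2 / (r₁ - horizonRadius c G A M) =
          2 * G * (M' * A - M * A') / (c * A) ^ 2 / (r₂ - horizonRadius c G A M) := by
      refine forall₄_congr fun r₁ r₂ h₁ h₂ => ?_
      rw [dampingCoefficient_eq_add_div_sub_horizonRadius A' M' hc hA h₁.ne',
        dampingCoefficient_eq_add_div_sub_horizonRadius A' M' hc hA h₂.ne', add_right_inj]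
    _ ↔ 2 * G * (M' * A - M * A') / (c * A) ^ 2 = 0 := forall_gt_div_sub_eq_div_sub_iff
    _ ↔ M' * A = M * A' := by simp [hc, hG, hA, sub_eq_zero]

end Pointwise

lemma exists_eq_const_mul_of_deriv_mul_eq_mul_deriv {𝕜 F : Type*} [RCLike 𝕜]
    [NontriviallyNormedField F] [NormedAlgebra 𝕜 F] {s : Set 𝕜} {f g f' g' : 𝕜 → F}
    (hs : Convex ℝ s) (hf : ∀ x ∈ s, HasDerivWithinAt f (f' x) s x)
    (hg : ∀ x ∈ s, HasDerivWithinAt g (g' x) s x) (hg₀ : ∀ x ∈ s, g x ≠ 0)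
    (hW : ∀ x ∈ s, f' x * g x = f x * g' x) :
    ∃ k, ∀ x ∈ s, f x = k * g x := by
  obtain rfl | ⟨x₀, hx₀⟩ := s.eq_empty_or_nonempty
  · simp
  have hquot : ∀ x ∈ s, HasDerivWithinAt (fun y => f y / g y) 0 s x := fun x hx => by
    simpa [hW x hx] using (hf x hx).fun_div (hg x hx) (hg₀ x hx)
  refine ⟨f x₀ / g x₀, fun x hx => ?_⟩
  have hconst : f x / g x = f x₀ / g x₀ := by
    simpa [sub_eq_zero] using
      hs.norm_image_sub_le_of_norm_hasDerivWithin_le hquot (fun _ _ => norm_zero.le) hx₀ hx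
  rw [← hconst, div_mul_cancel₀ _ (hg₀ x hx)]

lemma deriv_mul_eq_mul_deriv_of_eq_const_mul {𝕜 F : Type*} [NontriviallyNormedField 𝕜]
    [NormedCommRing F] [NormedAlgebra 𝕜 F] {s : Set 𝕜} {f g f' g' : 𝕜 → F} (hs : UniqueDiffOn 𝕜 s)
    (hf : ∀ x ∈ s, HasDerivWithinAt f (f' x) s x) (hg : ∀ x ∈ s, HasDerivWithinAt g (g' x) s x)
    {k : F} (hk : ∀ x ∈ s, f x = k * g x) :
    ∀ x ∈ s, f' x * g x = f x * g' x := fun x hx => by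
  have hf' : f' x = k * g' x :=
    (hs x hx).eq_deriv _ (hf x hx) (((hg x hx).const_mul k).congr hk (hk x hx))
  rw [hf', hk x hx, mul_right_comm]

theorem damping_independent_iff_mass_proportional_general {c G : ℝ} (hc : c ≠ 0) (hG : G ≠ 0)
    {s : Set ℝ} (hs : Convex ℝ s) (hs_unique : UniqueDiffOn ℝ s) {a Mbh a' Mbh' : ℝ → ℝ}
    (ha : ∀ t ∈ s, HasDerivWithinAt a (a' t) s t)
    (hMbh : ∀ t ∈ s, HasDerivWithinAt Mbh (Mbh' t) s t) (ha₀ : ∀ t ∈ s, a t ≠ 0) :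
    (∀ t ∈ s, ∀ r₁ r₂,
        horizonRadius c G (a t) (Mbh t) < r₁ → horizonRadius c G (a t) (Mbh t) < r₂ →
        dampingCoefficient c G (a t) (a' t) (Mbh t) (Mbh' t) r₁ =
          dampingCoefficient c G (a t) (a' t) (Mbh t) (Mbh' t) r₂) ↔
      ∃ k, ∀ t ∈ s, Mbh t = k * a t := by
  rw [forall₂_congr fun t ht => forall_gt_horizonRadius_dampingCoefficient_eq_iff
    (a' t) (Mbh t) (Mbh' t) hc hG (ha₀ t ht)]
  exact ⟨exists_eq_const_mul_of_deriv_mul_eq_mul_deriv hs hMbh ha ha₀,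
    fun ⟨_, hk⟩ => deriv_mul_eq_mul_deriv_of_eq_const_mul hs_unique hMbh ha hk⟩

/-- the damping coefficient of the d'Alembert operator is independent of the
spatial variable `r` (in the exterior of the black hole) if and only if the black-hole mass
is proportional to the scale factor, `M_bh(t) = k·a(t)`. -/
theorem damping_independent_iff_mass_proportional
    (c G : ℝ) (hc : 0 < c) (hG : 0 < G)
    (a Mbh a' Mbh' : ℝ → ℝ)
    (ha : ∀ t ∈ Set.Ici (0:ℝ), HasDerivWithinAt a (a' t) (Set.Ici 0) t)
    (ha'cont : ContinuousOn a' (Set.Ici 0))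
    (hMbh : ∀ t ∈ Set.Ici (0:ℝ), HasDerivWithinAt Mbh (Mbh' t) (Set.Ici 0) t)
    (hMbh'cont : ContinuousOn Mbh' (Set.Ici 0))
    (hapos : ∀ t ∈ Set.Ici (0:ℝ), 0 < a t)
    (hMpos : ∀ t ∈ Set.Ici (0:ℝ), 0 < Mbh t) :
    (∀ t ∈ Set.Ici (0:ℝ), ∀ r₁ r₂ : ℝ,
        2 * G * Mbh t / (c ^ 2 * a t) < r₁ → 2 * G * Mbh t / (c ^ 2 * a t) < r₂ →
        (3 * c ^ 2 * r₁ * a t * a' t - 8 * G * Mbh t * a' t + 2 * G * a t * Mbh' t) /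
            (a t * (c ^ 2 * r₁ * a t - 2 * G * Mbh t)) =
          (3 * c ^ 2 * r₂ * a t * a' t - 8 * G * Mbh t * a' t + 2 * G * a t * Mbh' t) /
            (a t * (c ^ 2 * r₂ * a t - 2 * G * Mbh t)))
      ↔ ∃ k : ℝ, 0 < k ∧ ∀ t ∈ Set.Ici (0:ℝ), Mbh t = k * a t := by
  have h0 : (0 : ℝ) ∈ Set.Ici 0 := Set.self_mem_Ici
  have hk_pos : ∀ k, (∀ t ∈ Set.Ici 0, Mbh t = k * a t) → 0 < k := fun k hk =>
    pos_of_mul_pos_left (hk 0 h0 ▸ hMpos 0 h0) (hapos 0 h0).le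
  exact (damping_independent_iff_mass_proportional_general hc.ne' hG.ne' (convex_Ici 0)
    (uniqueDiffOn_Ici 0) ha hMbh fun t ht => (hapos t ht).ne').trans
      (exists_congr fun k => (and_iff_right_of_imp (hk_pos k)).symm)
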